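/- Let A ∈ ℂ^{n×n} be Schur stable, (A,B) controllable, and B, C, D of compatible dimensions. Then μ_∞ ≤ 1 (the H∞ norm of the system (A,B,C,D) is at most 1) if and only if there exists a Hermitian P such that [A*PA−P, A*PB; B*PA, B*PB] + [C*C, C*D; D*C, D*D − I] ⪯ 0. -/

import Mathlib

open Matrix
open scoped ComplexOrder

/-- The squared `H∞` norm: supremum of the output energy over unit-energy disturbances. -/
noncomputable def muInfty {n m p : ℕ} (A : Matrix (Fin n) (Fin n) ℂ)
    (B : Matrix (Fin n) (Fin m) ℂ) (C : Matrix (Fin p) (Fin n) ℂ)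
    (D : Matrix (Fin p) (Fin m) ℂ) : ℝ :=
  sSup {r : ℝ | ∃ (w : ℕ → Fin m → ℂ) (x : ℕ → Fin n → ℂ) (z : ℕ → Fin p → ℂ),
    Summable (fun k => ∑ i, ‖w k i‖ ^ 2) ∧
    (∑' k, ∑ i, ‖w k i‖ ^ 2) = 1 ∧
    x 0 = 0 ∧ (∀ k, x (k + 1) = A.mulVec (x k) + B.mulVec (w k)) ∧
    (∀ k, z k = C.mulVec (x k) + D.mulVec (w k)) ∧
    r = ∑' k, ∑ i, ‖z k i‖ ^ 2}

/-- The controllability matrix `[B, AB, …, A^{n-1}B]`. -/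
noncomputable def ctrbMatrix {n m : ℕ} (A : Matrix (Fin n) (Fin n) ℂ)
    (B : Matrix (Fin n) (Fin m) ℂ) : Matrix (Fin n) (Fin n × Fin m) ℂ :=
  Matrix.of fun i kj => ((A ^ (kj.1 : ℕ)) * B) i kj.2

/-!
In a stable system the output energies of unit-energy inputs are bounded, so `μ∞ ≤ 1` says that
from rest, over every finite horizon, the output energy is at most the input energy. The KYP
inequality says that `V x = x* P x` satisfies the dissipation inequality
`V (A x + B u) + ‖C x + D u‖² ≤ V x + ‖u‖²`.

Given a solution `P`, the dissipation inequality makes `V` decrease along the trajectories `Aᵏ x`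
of zero input, and these tend to `0` by stability, so `V ≥ 0`. Adding up the inequality along a
trajectory from rest then bounds the output energy by the input energy.

Conversely, let `V x` be the available storage: the supremum of the output energy minus the input
energy over finite horizons and all inputs, starting in `x`. It is finite because `x` can be reached
from rest, where no energy can be extracted, and it satisfies the dissipation inequality because an
input after the first step extends to one from the start. For a fixed input the energy difference is
convex in `x`, hence so is `V`. Jointly in `x` and the input it is quadratic, so `V` is homogeneous
of degree two and, after padding inputs to a common horizon by zeros, satisfies one half of the
parallelogram law, hence all of it. So `V` is the square of a seminorm, which comes from a Hermitian
form by the theorem of Jordan and von Neumann.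
-/

open Filter Set Topology Function

section QuadraticForm

lemma sqrt_add_le_of_convexOn {E : Type*} [AddCommGroup E] [Module ℝ E] {V : E → ℝ}
    (hconv : ConvexOn ℝ univ V) (hsmul : ∀ (c : ℝ) x, V (c • x) = c ^ 2 * V x) (x y : E) :
    √(V (x + y)) ≤ √(V x) + √(V y) := by
  refine le_add_of_forall_lt fun a hxa b hyb => ?_
  have ha : 0 < a := (Real.sqrt_nonneg _).trans_lt hxa
  have hb : 0 < b := (Real.sqrt_nonneg _).trans_lt hyb
  have hscale : ∀ {c : ℝ} {z : E}, 0 < c → (V (c⁻¹ • z) ≤ 1 ↔ √(V z) ≤ c) := fun hc => by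
    rw [hsmul, inv_pow, inv_mul_le_one₀ (by positivity), Real.sqrt_le_left hc.le]
  have hcomb : (a / (a + b)) • a⁻¹ • x + (b / (a + b)) • b⁻¹ • y = (a + b)⁻¹ • (x + y) := by
    rw [smul_smul, smul_smul, smul_add]
    congr 2 <;> field_simp
  have hmem := (hconv.convex_le 1) (x := a⁻¹ • x) ⟨trivial, (hscale ha).2 hxa.le⟩
    (y := b⁻¹ • y) ⟨trivial, (hscale hb).2 hyb.le⟩ (by positivity) (by positivity)
    (by field_simp : a / (a + b) + b / (a + b) = 1)
  rw [hcomb] at hmem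
  exact (hscale (add_pos ha hb)).1 hmem.2

/-- The quotient by the null space makes the Jordan–von Neumann theorem available. -/
lemma exists_isSymm_apply_self_eq_sq_of_parallelogram {𝕜 E : Type*} [RCLike 𝕜] [AddCommGroup E]
    [Module 𝕜 E] (p : Seminorm 𝕜 E)
    (hpar : ∀ x y, p (x + y) ^ 2 + p (x - y) ^ 2 = 2 * (p x ^ 2 + p y ^ 2)) :
    ∃ f : E →ₗ⋆[𝕜] E →ₗ[𝕜] 𝕜, f.IsSymm ∧ ∀ x, f x x = (p x : 𝕜) ^ 2 := by
  let _ : SeminormedAddCommGroup E := p.toSeminormedAddCommGroup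
  let _ : NormedSpace 𝕜 E := ⟨fun c x => (map_smul_eq_mul p c x).le⟩
  have hnorm : ∀ x : E, ‖(SeparationQuotient.mk x : SeparationQuotient E)‖ = p x := fun _ => rfl
  let _ : InnerProductSpace 𝕜 (SeparationQuotient E) := .ofNorm 𝕜 fun x y => by
    obtain ⟨x, rfl⟩ := SeparationQuotient.surjective_mk x
    obtain ⟨y, rfl⟩ := SeparationQuotient.surjective_mk y
    simpa only [← SeparationQuotient.mk_add, ← SeparationQuotient.mk_sub, hnorm, ← sq]
      using hpar x y
  let mk : E →ₗ[𝕜] SeparationQuotient E := (SeparationQuotient.mkCLM 𝕜 E).toLinearMap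
  refine ⟨((innerₛₗ 𝕜).compl₂ mk).comp mk, ⟨fun x y => ?_⟩, fun x => ?_⟩
  · exact inner_conj_symm (𝕜 := 𝕜) (mk y) (mk x)
  · exact inner_self_eq_norm_sq_to_K (𝕜 := 𝕜) (mk x)

lemma exists_isSymm_apply_self_eq_of_convexOn {E : Type*} [AddCommGroup E] [Module ℂ E]
    {V : E → ℝ} (hconv : ConvexOn ℝ univ V) (hnonneg : ∀ x, 0 ≤ V x)
    (hsmul : ∀ (c : ℂ) x, V (c • x) = ‖c‖ ^ 2 * V x)
    (hpar : ∀ x y, V (x + y) + V (x - y) = 2 * (V x + V y)) :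
    ∃ f : E →ₗ⋆[ℂ] E →ₗ[ℂ] ℂ, f.IsSymm ∧ ∀ x, f x x = V x := by
  have hsmulReal : ∀ (c : ℝ) x, V (c • x) = c ^ 2 * V x := fun c x => by
    rw [← Complex.coe_smul, hsmul, Complex.norm_real, Real.norm_eq_abs, sq_abs]
  let p : Seminorm ℂ E := .of (fun x => √(V x)) (sqrt_add_le_of_convexOn hconv hsmulReal)
    fun c x => by rw [hsmul, Real.sqrt_mul (by positivity), Real.sqrt_sq (norm_nonneg c)]
  have hp : ∀ x, p x ^ 2 = V x := fun x => Real.sq_sqrt (hnonneg x)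
  obtain ⟨f, hf, hfp⟩ := exists_isSymm_apply_self_eq_sq_of_parallelogram p
    (by simpa only [hp] using hpar)
  exact ⟨f, hf, fun x => by rw [hfp, ← hp]; norm_cast⟩

end QuadraticForm

section Stability

lemma summable_norm_pow_of_spectralRadius_lt_one {R : Type*} [NormedRing R] [NormedAlgebra ℂ R]
    [CompleteSpace R] {a : R} (ha : spectralRadius ℂ a < 1) :
    Summable fun k : ℕ => ‖a ^ k‖ := by
  obtain ⟨r, har, hr⟩ := ENNReal.lt_iff_exists_nnreal_btwn.1 ha
  have hroot :=
    (spectrum.pow_nnnorm_pow_one_div_tendsto_nhds_spectralRadius a).eventually_lt_const har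
  have hpow : ∀ᶠ k : ℕ in atTop, ‖a ^ k‖ ≤ (r : ℝ) ^ k := by
    filter_upwards [hroot, eventually_ne_atTop 0] with k hk hk0
    rw [one_div, ENNReal.rpow_inv_lt_iff (by positivity), ENNReal.rpow_natCast] at hk
    exact_mod_cast hk.le
  refine (summable_geometric_of_lt_one r.2 (by exact_mod_cast hr)).of_norm_bounded_eventually_nat ?_
  simpa using hpow

variable {E : Type*} [NormedAddCommGroup E] [NormedSpace ℂ E] [CompleteSpace E] {A : E →L[ℂ] E}

lemma summable_norm_pow_apply (hA : spectralRadius ℂ A < 1) (x : E) :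
    Summable fun k : ℕ => ‖(A ^ k) x‖ :=
  ((summable_norm_pow_of_spectralRadius_lt_one hA).mul_right ‖x‖).of_nonneg_of_le
    (fun _ => norm_nonneg _) fun k => (A ^ k).le_opNorm x

lemma tendsto_pow_apply_zero (hA : spectralRadius ℂ A < 1) (x : E) :
    Tendsto (fun k : ℕ => (A ^ k) x) atTop (𝓝 0) :=
  tendsto_zero_iff_norm_tendsto_zero.2 (summable_norm_pow_apply hA x).tendsto_atTop_zero

lemma mul_add_sq_le {ρ : ℝ} (hρ : 0 ≤ ρ) (hρ1 : ρ < 1) (a b : ℝ) :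
    (ρ * a + b) ^ 2 ≤ ρ * a ^ 2 + b ^ 2 / (1 - ρ) := by
  have hpos : 0 < 1 - ρ := sub_pos.2 hρ1
  have hsq : ρ * a ^ 2 + b ^ 2 / (1 - ρ) - (ρ * a + b) ^ 2 =
      ρ * ((1 - ρ) * a - b) ^ 2 / (1 - ρ) := by
    field_simp
    ring
  exact sub_nonneg.1 (hsq ▸ by positivity)

/-- The adapted seminorm is `∑ₖ ‖Aᵏ x‖`, from which applying `A` drops the term `‖x‖`. -/
lemma exists_seminorm_contracting (hA : spectralRadius ℂ A < 1) :
    ∃ (p : Seminorm ℂ E) (ρ K : ℝ), 0 ≤ ρ ∧ ρ < 1 ∧ 0 ≤ K ∧ (∀ x, ‖x‖ ≤ p x) ∧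
      (∀ x, p x ≤ K * ‖x‖) ∧ ∀ x, p (A x) ≤ ρ * p x := by
  have hsum := summable_norm_pow_apply hA
  let p : Seminorm ℂ E := .of (fun x => ∑' k : ℕ, ‖(A ^ k) x‖)
    (fun x y => by
      rw [← (hsum x).tsum_add (hsum y)]
      refine (hsum (x + y)).tsum_le_tsum (fun k => ?_) ((hsum x).add (hsum y))
      rw [map_add]
      exact norm_add_le _ _)
    (fun c x => by simp only [map_smul, norm_smul, tsum_mul_left])
  have hstep : ∀ x, p x = ‖x‖ + p (A x) := fun x => by
    rw [show p x = ∑' k, ‖(A ^ k) x‖ from rfl, (hsum x).tsum_eq_zero_add]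
    simp only [pow_succ]
    rfl
  let K : ℝ := 1 + ∑' k : ℕ, ‖A ^ k‖
  have hK : 1 ≤ K := le_add_of_nonneg_right (tsum_nonneg fun _ => norm_nonneg _)
  have hpK : ∀ x, p x ≤ K * ‖x‖ := fun x => by
    have hpow := summable_norm_pow_of_spectralRadius_lt_one hA
    calc p x ≤ ∑' k : ℕ, ‖A ^ k‖ * ‖x‖ :=
          (hsum x).tsum_le_tsum (fun k => (A ^ k).le_opNorm x) (hpow.mul_right _)
      _ = (∑' k : ℕ, ‖A ^ k‖) * ‖x‖ := tsum_mul_right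
      _ ≤ K * ‖x‖ := by gcongr; exact le_add_of_nonneg_left zero_le_one
  refine ⟨p, 1 - K⁻¹, K, sub_nonneg.2 (inv_le_one_of_one_le₀ hK), sub_lt_self _ (by positivity),
    by positivity, fun x => ?_, hpK, fun x => ?_⟩
  · linarith [hstep x, apply_nonneg p (A x)]
  · have : K⁻¹ * p x ≤ ‖x‖ := (inv_mul_le_iff₀ (by positivity)).2 (hpK x)
    linarith [hstep x]

end Stability

lemma hasSum_sq_norm_indicator {U : Type*} [SeminormedAddCommGroup U] (N : ℕ)
    (w : ℕ → U) :
    HasSum (fun k => ‖(Iio N).indicator w k‖ ^ 2) (∑ k ∈ Finset.range N, ‖w k‖ ^ 2) := by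
  have hsum : HasSum (fun k => ‖(Iio N).indicator w k‖ ^ 2) _ :=
    hasSum_sum_of_ne_finset_zero (s := Finset.range N) fun k hk => by
      rw [indicator_of_notMem (by simpa using hk), norm_zero, zero_pow two_ne_zero]
  rwa [Finset.sum_congr rfl fun k hk => by
    rw [indicator_of_mem (mem_Iio.2 (Finset.mem_range.1 hk))]] at hsum

/-- The discrete-time linear system `x⁺ = A x + B u`, `y = C x + D u` with state space `E`, input
space `U` and output space `Y`. Energies of inputs and outputs are measured in Hilbert norms,
whereas the norm of the state space only serves to express stability. -/
structure LinearSystem (E U Y : Type*) [NormedAddCommGroup E] [NormedSpace ℂ E]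
    [NormedAddCommGroup U] [InnerProductSpace ℂ U] [NormedAddCommGroup Y]
    [InnerProductSpace ℂ Y] where
  A : E →L[ℂ] E
  B : U →L[ℂ] E
  C : E →L[ℂ] Y
  D : U →L[ℂ] Y

namespace LinearSystem

variable {E U Y : Type*} [NormedAddCommGroup E] [NormedSpace ℂ E]
  [NormedAddCommGroup U] [InnerProductSpace ℂ U] [NormedAddCommGroup Y] [InnerProductSpace ℂ Y]
  (S : LinearSystem E U Y)

/-- The state at time `k`, as a linear function of the initial state and the input sequence. -/
def state : ℕ → (E × (ℕ → U) →ₗ[ℂ] E)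
  | 0 => .fst ℂ E (ℕ → U)
  | k + 1 => S.A.toLinearMap ∘ₗ state k +
      S.B.toLinearMap ∘ₗ .proj k ∘ₗ .snd ℂ E (ℕ → U)

/-- The output at time `k`, as a linear function of the initial state and the input sequence. -/
def output (k : ℕ) : E × (ℕ → U) →ₗ[ℂ] Y :=
  S.C.toLinearMap ∘ₗ S.state k + S.D.toLinearMap ∘ₗ .proj k ∘ₗ .snd ℂ E (ℕ → U)

/-- The output energy minus the input energy before time `N`. -/
def energyGain (x : E) (N : ℕ) (w : ℕ → U) : ℝ :=
  ∑ k ∈ Finset.range N, (‖S.output k (x, w)‖ ^ 2 - ‖w k‖ ^ 2)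

/-- Every state can be reached from rest in finite time. -/
def IsControllable : Prop := ∀ x, ∃ k w, S.state k (0, w) = x

/-- From rest, the system never emits more energy than it has received. -/
def IsNonexpansive : Prop := ∀ N w, S.energyGain 0 N w ≤ 0

/-- `V` is a storage function in the sense of Willems, for the supply rate `γ ‖u‖² - ‖y‖²`. No sign
is imposed on `V`. -/
def IsStorage (γ : ℝ) (V : E → ℝ) : Prop :=
  ∀ x u, V (S.A x + S.B u) + ‖S.C x + S.D u‖ ^ 2 ≤ V x + γ * ‖u‖ ^ 2

section Trajectories

@[simp] lemma state_zero (q : E × (ℕ → U)) : S.state 0 q = q.1 := rfl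

lemma state_succ (k : ℕ) (q : E × (ℕ → U)) :
    S.state (k + 1) q = S.A (S.state k q) + S.B (q.2 k) := rfl

lemma output_apply (k : ℕ) (q : E × (ℕ → U)) :
    S.output k q = S.C (S.state k q) + S.D (q.2 k) := rfl

lemma eq_state {x : ℕ → E} {w : ℕ → U} (hx : ∀ k, x (k + 1) = S.A (x k) + S.B (w k)) (k : ℕ) :
    x k = S.state k (x 0, w) := by
  induction k with
  | zero => rfl
  | succ k ih => rw [hx, ih, state_succ]

lemma state_zero_input (k : ℕ) (x : E) : S.state k (x, 0) = (S.A ^ k) x := by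
  induction k with
  | zero => rfl
  | succ k ih => simp [state_succ, ih, pow_succ']

lemma state_succ' (k : ℕ) (x : E) (w : ℕ → U) :
    S.state (k + 1) (x, w) = S.state k (S.A x + S.B (w 0), fun j => w (j + 1)) := by
  induction k with
  | zero => rfl
  | succ k ih => rw [state_succ, ih, state_succ]

lemma state_congr {w w' : ℕ → U} {k : ℕ} (h : ∀ j < k, w j = w' j) (x : E) :
    S.state k (x, w) = S.state k (x, w') := by
  induction k with
  | zero => rfl
  | succ k ih =>
    simp only [state_succ, ih fun j hj => h j (hj.trans k.lt_succ_self), h k k.lt_succ_self]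

lemma output_congr {w w' : ℕ → U} {k : ℕ} (h : ∀ j ≤ k, w j = w' j) (x : E) :
    S.output k (x, w) = S.output k (x, w') := by
  simp only [output_apply, h k le_rfl, S.state_congr fun j hj => h j hj.le]

lemma exists_state_eq_sum (v : ℕ → U) (N : ℕ) :
    ∃ w, S.state N (0, w) = ∑ j ∈ Finset.range N, (S.A ^ j) (S.B (v j)) := by
  induction N with
  | zero => exact ⟨0, rfl⟩
  | succ N ih =>
    obtain ⟨w, hw⟩ := ih
    refine ⟨fun | 0 => v N | k + 1 => w k, ?_⟩
    have hsplit : (S.A 0 + S.B (v N), w) = (0, w) + (S.B (v N), 0) := by simp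
    simp only [state_succ', hsplit, map_add, hw, state_zero_input, Finset.sum_range_succ]

end Trajectories

section EnergyGain

lemma energyGain_succ (x : E) (N : ℕ) (w : ℕ → U) :
    S.energyGain x (N + 1) w = S.energyGain (S.A x + S.B (w 0)) N (fun k => w (k + 1)) +
      (‖S.C x + S.D (w 0)‖ ^ 2 - ‖w 0‖ ^ 2) := by
  simp only [energyGain, Finset.sum_range_succ', output_apply, state_succ', state_zero]

lemma exists_energyGain_succ_eq (x : E) (N : ℕ) (u : U) (w : ℕ → U) :
    ∃ w', S.energyGain x (N + 1) w' =
      S.energyGain (S.A x + S.B u) N w + (‖S.C x + S.D u‖ ^ 2 - ‖u‖ ^ 2) :=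
  ⟨fun | 0 => u | k + 1 => w k, by simp only [energyGain_succ]⟩

lemma energyGain_congr {w w' : ℕ → U} {N : ℕ} (h : ∀ k < N, w k = w' k) (x : E) :
    S.energyGain x N w = S.energyGain x N w' := by
  refine Finset.sum_congr rfl fun k hk => ?_
  have hkN := Finset.mem_range.1 hk
  rw [h k hkN, S.output_congr fun j hj => h j (hj.trans_lt hkN)]

lemma energyGain_smul (c : ℂ) (x : E) (N : ℕ) (w : ℕ → U) :
    S.energyGain (c • x) N (c • w) = ‖c‖ ^ 2 * S.energyGain x N w := by
  simp only [energyGain, ← Prod.smul_mk, map_smul, Pi.smul_apply, norm_smul, mul_pow, ← mul_sub,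
    Finset.mul_sum]

lemma energyGain_add_add_energyGain_sub (x y : E) (N : ℕ) (w v : ℕ → U) :
    S.energyGain (x + y) N (w + v) + S.energyGain (x - y) N (w - v) =
      2 * (S.energyGain x N w + S.energyGain y N v) := by
  simp only [energyGain, ← Finset.sum_add_distrib, Finset.mul_sum]
  refine Finset.sum_congr rfl fun k _ => ?_
  have hout := parallelogram_law_with_norm ℂ (S.output k (x, w)) (S.output k (y, v))
  have hin := parallelogram_law_with_norm ℂ (w k) (v k)
  rw [← map_add, ← map_sub, Prod.mk_add_mk, Prod.mk_sub_mk] at hout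
  simp only [Pi.add_apply, Pi.sub_apply]
  linarith

lemma convexOn_energyGain (N : ℕ) (w : ℕ → U) :
    ConvexOn ℝ univ fun x => S.energyGain x N w := by
  refine ⟨convex_univ, fun x _ y _ a b ha hb hab => ?_⟩
  simp only [energyGain, smul_eq_mul, Finset.mul_sum, ← Finset.sum_add_distrib]
  refine Finset.sum_le_sum fun k _ => ?_
  have hcomb : S.output k (a • x + b • y, w) = a • S.output k (x, w) + b • S.output k (y, w) := by
    rw [← Complex.coe_smul a (S.output k (x, w)), ← Complex.coe_smul b (S.output k (y, w)),
      ← map_smul, ← map_smul, ← map_add]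
    simp [← add_smul, hab]
  have hsq := ((convexOn_univ_norm (E := Y)).pow (fun _ _ => norm_nonneg _) 2).2
    (mem_univ (S.output k (x, w))) (mem_univ (S.output k (y, w))) ha hb hab
  simp only [← hcomb, Pi.pow_apply, smul_eq_mul] at hsq
  linear_combination hsq + ‖w k‖ ^ 2 * hab

lemma energyGain_le_energyGain_indicator {N M : ℕ} (h : N ≤ M) (x : E) (w : ℕ → U) :
    S.energyGain x N w ≤ S.energyGain x M ((Iio N).indicator w) := by
  rw [S.energyGain_congr fun k hk => (indicator_of_mem (mem_Iio.2 hk) w).symm]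
  refine Finset.sum_le_sum_of_subset_of_nonneg (Finset.range_mono h) fun k _ hk => ?_
  rw [indicator_of_notMem (by simpa using hk), norm_zero]
  simp

end EnergyGain

section AvailableStorage

/-- Willems' available storage: the largest amount of energy that can be extracted from the system
when it starts in state `x`. It is `0` by convention where this amount is infinite. -/
noncomputable def availableStorage (x : E) : ℝ := ⨆ q, uncurry (S.energyGain x) q

variable {S}

lemma bddAbove_energyGain_step {x : E} (h : BddAbove (range (uncurry (S.energyGain x)))) (u : U) :
    BddAbove (range (uncurry (S.energyGain (S.A x + S.B u)))) := by
  obtain ⟨c, hc⟩ := h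
  refine ⟨c - (‖S.C x + S.D u‖ ^ 2 - ‖u‖ ^ 2), ?_⟩
  rintro _ ⟨⟨N, w⟩, rfl⟩
  obtain ⟨w', hw'⟩ := S.exists_energyGain_succ_eq x N u w
  rw [uncurry_apply_pair, le_sub_iff_add_le, ← hw']
  exact hc ⟨(N + 1, w'), rfl⟩

lemma IsNonexpansive.bddAbove_energyGain (hS : S.IsNonexpansive) (hctrb : S.IsControllable)
    (x : E) : BddAbove (range (uncurry (S.energyGain x))) := by
  obtain ⟨k, w, rfl⟩ := hctrb x
  induction k with
  | zero => exact ⟨0, forall_mem_range.2 fun q => hS q.1 q.2⟩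
  | succ k ih => exact bddAbove_energyGain_step ih (w k)

lemma IsNonexpansive.availableStorage_zero (hS : S.IsNonexpansive) : S.availableStorage 0 = 0 :=
  le_antisymm (ciSup_le fun q => hS q.1 q.2)
    (le_ciSup_of_le ⟨0, forall_mem_range.2 fun q => hS q.1 q.2⟩ (0, 0) le_rfl)

lemma IsNonexpansive.availableStorage_smul (hS : S.IsNonexpansive) (c : ℂ) (x : E) :
    S.availableStorage (c • x) = ‖c‖ ^ 2 * S.availableStorage x := by
  obtain rfl | hc := eq_or_ne c 0
  · simp [hS.availableStorage_zero]
  have hsurj : Surjective (Prod.map id (c • ·) : ℕ × (ℕ → U) → ℕ × (ℕ → U)) :=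
    surjective_id.prodMap (MulAction.surjective₀ hc)
  rw [availableStorage, availableStorage, Real.mul_iSup_of_nonneg (by positivity),
    ← hsurj.iSup_comp]
  exact iSup_congr fun q => S.energyGain_smul c x q.1 q.2

section Bounded

variable (hbdd : ∀ x, BddAbove (range (uncurry (S.energyGain x))))
include hbdd

lemma energyGain_le_availableStorage (x : E) (N : ℕ) (w : ℕ → U) :
    S.energyGain x N w ≤ S.availableStorage x :=
  le_ciSup (hbdd x) (N, w)

lemma availableStorage_nonneg (x : E) : 0 ≤ S.availableStorage x :=
  energyGain_le_availableStorage hbdd x 0 0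

lemma convexOn_availableStorage : ConvexOn ℝ univ S.availableStorage := by
  refine ⟨convex_univ, fun x hx y hy a b ha hb hab => ciSup_le fun ⟨N, w⟩ => ?_⟩
  refine ((S.convexOn_energyGain N w).2 hx hy ha hb hab).trans ?_
  gcongr <;> exact energyGain_le_availableStorage hbdd _ N w

lemma availableStorage_add_availableStorage_le (x y : E) :
    2 * (S.availableStorage x + S.availableStorage y) ≤
      S.availableStorage (x + y) + S.availableStorage (x - y) := by
  rw [← le_div_iff₀' two_pos]
  refine ciSup_add_ciSup_le fun ⟨N, w⟩ ⟨M, v⟩ => ?_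
  have hN := S.energyGain_le_energyGain_indicator (le_max_left N M) x w
  have hM := S.energyGain_le_energyGain_indicator (le_max_right N M) y v
  have hpar := S.energyGain_add_add_energyGain_sub x y (max N M) ((Iio N).indicator w)
    ((Iio M).indicator v)
  have hadd := energyGain_le_availableStorage hbdd (x + y) (max N M)
    ((Iio N).indicator w + (Iio M).indicator v)
  have hsub := energyGain_le_availableStorage hbdd (x - y) (max N M)
    ((Iio N).indicator w - (Iio M).indicator v)
  simp only [uncurry_apply_pair]
  linarith

lemma isStorage_availableStorage : S.IsStorage 1 S.availableStorage := by
  intro x u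
  suffices S.availableStorage (S.A x + S.B u) ≤
      S.availableStorage x - (‖S.C x + S.D u‖ ^ 2 - ‖u‖ ^ 2) by linarith
  refine ciSup_le fun ⟨N, w⟩ => ?_
  obtain ⟨w', hw'⟩ := S.exists_energyGain_succ_eq x N u w
  rw [uncurry_apply_pair, le_sub_iff_add_le, ← hw']
  exact energyGain_le_availableStorage hbdd x (N + 1) w'

end Bounded

lemma IsNonexpansive.availableStorage_parallelogram (hS : S.IsNonexpansive)
    (hbdd : ∀ x, BddAbove (range (uncurry (S.energyGain x)))) (x y : E) :
    S.availableStorage (x + y) + S.availableStorage (x - y) =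
      2 * (S.availableStorage x + S.availableStorage y) := by
  refine le_antisymm ?_ (availableStorage_add_availableStorage_le hbdd x y)
  have hdouble : ∀ z, S.availableStorage (z + z) = 4 * S.availableStorage z := fun z => by
    rw [← two_smul ℂ z, hS.availableStorage_smul]
    norm_num
  have h := availableStorage_add_availableStorage_le hbdd (x + y) (x - y)
  rw [add_add_sub_cancel, add_sub_sub_cancel, hdouble, hdouble] at h
  linarith

end AvailableStorage

section Storage

variable {S} {γ : ℝ} {V : E → ℝ}

lemma IsNonexpansive.exists_isSymm_isStorage (hS : S.IsNonexpansive) (hctrb : S.IsControllable) :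
    ∃ f : E →ₗ⋆[ℂ] E →ₗ[ℂ] ℂ, f.IsSymm ∧ S.IsStorage 1 fun x => (f x x).re := by
  have hbdd := hS.bddAbove_energyGain hctrb
  obtain ⟨f, hf, hfV⟩ := exists_isSymm_apply_self_eq_of_convexOn (convexOn_availableStorage hbdd)
    (availableStorage_nonneg hbdd) hS.availableStorage_smul (hS.availableStorage_parallelogram hbdd)
  exact ⟨f, hf, by simpa only [hfV, Complex.ofReal_re] using isStorage_availableStorage hbdd⟩

lemma IsStorage.nonneg [CompleteSpace E] (hV : S.IsStorage γ V) (hA : spectralRadius ℂ S.A < 1)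
    (hV0 : V 0 = 0) (hcont : ContinuousAt V 0) (x : E) : 0 ≤ V x := by
  have hdecr : ∀ k : ℕ, V ((S.A ^ k) x) ≤ V x := fun k => by
    induction k with
    | zero => rfl
    | succ k ih =>
      have hstep := hV ((S.A ^ k) x) 0
      rw [map_zero, map_zero, add_zero, add_zero, norm_zero] at hstep
      rw [pow_succ', mul_apply_eq_comp]
      nlinarith [sq_nonneg ‖S.C ((S.A ^ k) x)‖]
  exact hV0 ▸ le_of_tendsto (hcont.tendsto.comp (tendsto_pow_apply_zero hA x)) (.of_forall hdecr)

lemma IsStorage.sum_sq_output_le (hV : S.IsStorage γ V) (hV0 : V 0 = 0) (hnonneg : ∀ x, 0 ≤ V x)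
    (N : ℕ) (w : ℕ → U) :
    ∑ k ∈ Finset.range N, ‖S.output k (0, w)‖ ^ 2 ≤ γ * ∑ k ∈ Finset.range N, ‖w k‖ ^ 2 := by
  suffices V (S.state N (0, w)) + ∑ k ∈ Finset.range N, ‖S.output k (0, w)‖ ^ 2 ≤
      γ * ∑ k ∈ Finset.range N, ‖w k‖ ^ 2 from
    (le_add_of_nonneg_left (hnonneg _)).trans this
  induction N with
  | zero => simp [hV0]
  | succ N ih =>
    have hstep := hV (S.state N (0, w)) (w N)
    rw [Finset.sum_range_succ, Finset.sum_range_succ, state_succ, output_apply, mul_add]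
    linarith

lemma IsStorage.isNonexpansive (hV : S.IsStorage 1 V) (hV0 : V 0 = 0) (hnonneg : ∀ x, 0 ≤ V x) :
    S.IsNonexpansive := fun N w => by
  simpa only [energyGain, Finset.sum_sub_distrib, sub_nonpos, one_mul] using
    hV.sum_sq_output_le hV0 hnonneg N w

lemma exists_isStorage_seminorm [CompleteSpace E] (hA : spectralRadius ℂ S.A < 1) :
    ∃ (p : Seminorm ℂ E) (c γ : ℝ), 0 ≤ c ∧ S.IsStorage γ fun x => c * p x ^ 2 := by
  obtain ⟨p, ρ, K, hρ, hρ1, hK, hp, hpK, hpA⟩ := exists_seminorm_contracting hA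
  have hρ' : 0 < 1 - ρ := sub_pos.2 hρ1
  have hB : ∀ u, p (S.B u) ≤ K * ‖S.B‖ * ‖u‖ := fun u =>
    (hpK _).trans (by rw [mul_assoc]; gcongr; exact S.B.le_opNorm u)
  have hstate : ∀ x u, p (S.A x + S.B u) ^ 2 ≤ ρ * p x ^ 2 + (K * ‖S.B‖ * ‖u‖) ^ 2 / (1 - ρ) :=
    fun x u => (mul_add_sq_le hρ hρ1 _ _).trans' <| by
      gcongr
      exact (map_add_le_add p _ _).trans (add_le_add (hpA x) (hB u))
  have hout : ∀ x u, ‖S.C x + S.D u‖ ^ 2 ≤ 2 * ‖S.C‖ ^ 2 * p x ^ 2 + 2 * ‖S.D‖ ^ 2 * ‖u‖ ^ 2 :=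
    fun x u => by
      have hC : ‖S.C x‖ ≤ ‖S.C‖ * p x := (S.C.le_opNorm x).trans (by gcongr; exact hp x)
      calc ‖S.C x + S.D u‖ ^ 2 ≤ (‖S.C‖ * p x + ‖S.D‖ * ‖u‖) ^ 2 := by
            gcongr
            exact (norm_add_le _ _).trans (add_le_add hC (S.D.le_opNorm u))
        _ ≤ 2 * ((‖S.C‖ * p x) ^ 2 + (‖S.D‖ * ‖u‖) ^ 2) := add_sq_le
        _ = _ := by ring
  let c := 2 * ‖S.C‖ ^ 2 / (1 - ρ)
  have hc : 0 ≤ c := by positivity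
  refine ⟨p, c, c * (K * ‖S.B‖) ^ 2 / (1 - ρ) + 2 * ‖S.D‖ ^ 2, hc, fun x u => ?_⟩
  calc c * p (S.A x + S.B u) ^ 2 + ‖S.C x + S.D u‖ ^ 2
      ≤ c * (ρ * p x ^ 2 + (K * ‖S.B‖ * ‖u‖) ^ 2 / (1 - ρ)) +
        (2 * ‖S.C‖ ^ 2 * p x ^ 2 + 2 * ‖S.D‖ ^ 2 * ‖u‖ ^ 2) := by
        gcongr
        exacts [hstate x u, hout x u]
    _ = c * p x ^ 2 + (c * (K * ‖S.B‖) ^ 2 / (1 - ρ) + 2 * ‖S.D‖ ^ 2) * ‖u‖ ^ 2 := by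
        simp only [c]
        field_simp
        ring

end Storage

section HInfty

/-- The square of the `H∞` norm: the supremum of the output energy over unit-energy inputs, the
system starting from rest. It is only meaningful for stable systems: where the supremum is infinite
or an output has infinite energy, junk values enter. -/
noncomputable def hInftySq : ℝ :=
  sSup ((fun w => ∑' k, ‖S.output k (0, w)‖ ^ 2) '' {w : ℕ → U | HasSum (fun k => ‖w k‖ ^ 2) 1})

variable {S}

lemma IsNonexpansive.hInftySq_le_one (hS : S.IsNonexpansive) : S.hInftySq ≤ 1 := by
  refine Real.sSup_le (forall_mem_image.2 fun w hw => ?_) zero_le_one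
  refine Real.tsum_le_of_sum_range_le (fun _ => sq_nonneg _) fun N => ?_
  have hN := hS N w
  rw [energyGain, Finset.sum_sub_distrib, sub_nonpos] at hN
  exact hN.trans (sum_le_hasSum _ (fun _ _ => sq_nonneg _) hw)

lemma exists_sum_sq_output_le [CompleteSpace E] (hA : spectralRadius ℂ S.A < 1) :
    ∃ γ : ℝ, ∀ N (w : ℕ → U),
      ∑ k ∈ Finset.range N, ‖S.output k (0, w)‖ ^ 2 ≤ γ * ∑ k ∈ Finset.range N, ‖w k‖ ^ 2 := by
  obtain ⟨p, c, γ, hc, hV⟩ := exists_isStorage_seminorm hA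
  exact ⟨γ, hV.sum_sq_output_le (by simp) fun x => by positivity⟩

lemma sum_sq_output_le_hInftySq [CompleteSpace E] (hA : spectralRadius ℂ S.A < 1) {w : ℕ → U}
    (hw : HasSum (fun k => ‖w k‖ ^ 2) 1) (N : ℕ) :
    ∑ k ∈ Finset.range N, ‖S.output k (0, w)‖ ^ 2 ≤ S.hInftySq := by
  obtain ⟨γ, hγ⟩ := exists_sum_sq_output_le hA
  have hbound : ∀ v : ℕ → U, HasSum (fun k => ‖v k‖ ^ 2) 1 → ∀ N,
      ∑ k ∈ Finset.range N, ‖S.output k (0, v)‖ ^ 2 ≤ |γ| := fun v hv N => by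
    have hle : ∑ k ∈ Finset.range N, ‖v k‖ ^ 2 ≤ 1 := sum_le_hasSum _ (fun _ _ => sq_nonneg _) hv
    calc _ ≤ γ * ∑ k ∈ Finset.range N, ‖v k‖ ^ 2 := hγ N v
      _ ≤ |γ| * 1 := by gcongr; exact le_abs_self γ
      _ = |γ| := mul_one _
  have hbdd : BddAbove ((fun w => ∑' k, ‖S.output k (0, w)‖ ^ 2) ''
      {w : ℕ → U | HasSum (fun k => ‖w k‖ ^ 2) 1}) :=
    ⟨|γ|, forall_mem_image.2 fun v hv =>
      Real.tsum_le_of_sum_range_le (fun _ => sq_nonneg _) (hbound v hv)⟩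
  have hsum := summable_of_sum_range_le (fun _ => sq_nonneg _) (hbound w hw)
  exact (hsum.sum_le_tsum _ fun _ _ => sq_nonneg _).trans (le_csSup hbdd (mem_image_of_mem _ hw))

lemma sum_sq_output_le_hInftySq_mul [CompleteSpace E] (hA : spectralRadius ℂ S.A < 1) (N : ℕ)
    (w : ℕ → U) :
    ∑ k ∈ Finset.range N, ‖S.output k (0, w)‖ ^ 2 ≤
      S.hInftySq * ∑ k ∈ Finset.range N, ‖w k‖ ^ 2 := by
  obtain h0 | hpos : ∑ k ∈ Finset.range N, ‖w k‖ ^ 2 = 0 ∨ 0 < ∑ k ∈ Finset.range N, ‖w k‖ ^ 2 :=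
    (Finset.sum_nonneg fun _ _ => sq_nonneg _).eq_or_lt'
  · obtain ⟨γ, hγ⟩ := exists_sum_sq_output_le hA
    simpa only [h0, mul_zero] using hγ N w
  set e := ∑ k ∈ Finset.range N, ‖w k‖ ^ 2
  let c : ℂ := ((√e)⁻¹ : ℝ)
  have hc : ‖c‖ ^ 2 = e⁻¹ := by
    rw [Complex.norm_real, Real.norm_eq_abs, sq_abs, inv_pow, Real.sq_sqrt hpos.le]
  let v : ℕ → U := c • (Iio N).indicator w
  have hv : HasSum (fun k => ‖v k‖ ^ 2) 1 := by
    have hsum := (hasSum_sq_norm_indicator N w).mul_left e⁻¹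
    rw [inv_mul_cancel₀ hpos.ne'] at hsum
    simpa only [v, Pi.smul_apply, norm_smul, mul_pow, hc] using hsum
  have hout : ∀ k ∈ Finset.range N, ‖S.output k (0, v)‖ ^ 2 = e⁻¹ * ‖S.output k (0, w)‖ ^ 2 :=
    fun k hk => by
      have hcongr := S.output_congr (w := (Iio N).indicator w) (w' := w) (k := k)
        (fun j hj => indicator_of_mem (mem_Iio.2 (hj.trans_lt (Finset.mem_range.1 hk))) w) 0
      rw [← hc, ← mul_pow, ← norm_smul, ← hcongr, ← map_smul, Prod.smul_mk, smul_zero]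
  have hle := sum_sq_output_le_hInftySq hA hv N
  rwa [Finset.sum_congr rfl hout, ← Finset.mul_sum, inv_mul_le_iff₀ hpos, mul_comm] at hle

lemma isNonexpansive_of_hInftySq_le_one [CompleteSpace E] (hA : spectralRadius ℂ S.A < 1)
    (hS : S.hInftySq ≤ 1) : S.IsNonexpansive := fun N w => by
  rw [energyGain, Finset.sum_sub_distrib, sub_nonpos]
  exact (sum_sq_output_le_hInftySq_mul hA N w).trans
    (mul_le_of_le_one_left (Finset.sum_nonneg fun _ _ => sq_nonneg _) hS)

theorem hInftySq_le_one_iff [CompleteSpace E] (hA : spectralRadius ℂ S.A < 1) :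
    S.hInftySq ≤ 1 ↔ S.IsNonexpansive :=
  ⟨isNonexpansive_of_hInftySq_le_one hA, IsNonexpansive.hInftySq_le_one⟩

end HInfty

end LinearSystem

section HermitianForm

lemma exists_isHermitian_dotProduct_mulVec_eq {n : Type*} [Fintype n]
    {f : (n → ℂ) →ₗ⋆[ℂ] (n → ℂ) →ₗ[ℂ] ℂ} (hf : f.IsSymm) :
    ∃ P : Matrix n n ℂ, P.IsHermitian ∧ ∀ x, star x ⬝ᵥ P *ᵥ x = f x x := by
  classical
  exact ⟨LinearMap.toMatrix₂ (Pi.basisFun ℂ n) (Pi.basisFun ℂ n) f,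
    (LinearMap.isSymm_iff_isHermitian_toMatrix _).1 hf,
    fun x => star_dotProduct_toMatrix₂_mulVec (Pi.basisFun ℂ n) x x⟩

lemma posSemidef_iff_re_dotProduct_nonneg {n : Type*} [Fintype n] {M : Matrix n n ℂ}
    (hM : M.IsHermitian) :
    M.PosSemidef ↔ ∀ x, 0 ≤ (star x ⬝ᵥ M *ᵥ x).re := by
  refine ⟨fun h => h.re_dotProduct_nonneg, fun h => .of_dotProduct_mulVec_nonneg hM fun x => ?_⟩
  exact Complex.nonneg_iff.2 ⟨h x, (hM.im_star_dotProduct_mulVec_self x).symm⟩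

lemma isHermitian_fromBlocks_one {n k : Type*} [DecidableEq k] {P : Matrix n n ℂ}
    (hP : P.IsHermitian) : (fromBlocks P 0 0 (1 : Matrix k k ℂ)).IsHermitian :=
  hP.fromBlocks (conjTranspose_zero ..) isHermitian_one

lemma re_star_dotProduct_fromBlocks_one_mulVec {n k : Type*} [Fintype n] [Fintype k]
    [DecidableEq k] {P : Matrix n n ℂ} (x : n → ℂ) (u : k → ℂ) :
    (star (Sum.elim x u) ⬝ᵥ fromBlocks P 0 0 (1 : Matrix k k ℂ) *ᵥ Sum.elim x u).re =
      (star x ⬝ᵥ P *ᵥ x).re + ‖WithLp.toLp 2 u‖ ^ 2 := by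
  have hu : (star u ⬝ᵥ u).re = ‖WithLp.toLp 2 u‖ ^ 2 := by
    rw [EuclideanSpace.norm_sq_eq, dotProduct, Complex.re_sum]
    refine Finset.sum_congr rfl fun i _ => ?_
    rw [Pi.star_apply, RCLike.star_def, Complex.conj_mul', ← Complex.ofReal_pow, Complex.ofReal_re]
  simp only [fromBlocks_mulVec, Sum.elim_comp_inl, Sum.elim_comp_inr, zero_mulVec, one_mulVec,
    add_zero, zero_add, Function.star_sumElim, sumElim_dotProduct_sumElim, Complex.add_re, hu]

end HermitianForm

section KYPMatrix

variable {n m p : Type*} [Fintype n] [Fintype p] [DecidableEq m]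
  {A P : Matrix n n ℂ} {B : Matrix n m ℂ} {C : Matrix p n ℂ} {D : Matrix p m ℂ}

/-- The block matrix whose negative semidefiniteness is the KYP inequality for `P`. -/
def kypMatrix (A : Matrix n n ℂ) (B : Matrix n m ℂ) (C : Matrix p n ℂ) (D : Matrix p m ℂ)
    (P : Matrix n n ℂ) : Matrix (n ⊕ m) (n ⊕ m) ℂ :=
  fromBlocks (Aᴴ * P * A - P) (Aᴴ * P * B) (Bᴴ * P * A) (Bᴴ * P * B) +
    fromBlocks (Cᴴ * C) (Cᴴ * D) (Dᴴ * C) (Dᴴ * D - 1)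

lemma neg_kypMatrix_eq [DecidableEq p] :
    -kypMatrix A B C D P = fromBlocks P 0 0 (1 : Matrix m m ℂ) -
      (fromBlocks A B C D)ᴴ * fromBlocks P 0 0 (1 : Matrix p p ℂ) * fromBlocks A B C D := by
  rw [eq_sub_iff_add_eq, neg_add_eq_iff_eq_add]
  simp only [kypMatrix, fromBlocks_conjTranspose, fromBlocks_multiply, fromBlocks_add,
    Matrix.mul_zero, Matrix.mul_one, add_zero, zero_add]
  congr 1
  · abel
  · abel

lemma isHermitian_neg_kypMatrix (hP : P.IsHermitian) : (-kypMatrix A B C D P).IsHermitian := by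
  classical
  rw [neg_kypMatrix_eq]
  exact (isHermitian_fromBlocks_one hP).sub
    (isHermitian_conjTranspose_mul_mul _ (isHermitian_fromBlocks_one hP))

lemma re_star_dotProduct_neg_kypMatrix_mulVec [Fintype m] (x : n → ℂ) (u : m → ℂ) :
    (star (Sum.elim x u) ⬝ᵥ -kypMatrix A B C D P *ᵥ Sum.elim x u).re =
      (star x ⬝ᵥ P *ᵥ x).re + ‖WithLp.toLp 2 u‖ ^ 2 -
        ((star (A *ᵥ x + B *ᵥ u) ⬝ᵥ P *ᵥ (A *ᵥ x + B *ᵥ u)).re +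
          ‖WithLp.toLp 2 (C *ᵥ x + D *ᵥ u)‖ ^ 2) := by
  classical
  rw [neg_kypMatrix_eq, sub_mulVec, dotProduct_sub, Complex.sub_re, ← mulVec_mulVec,
    ← mulVec_mulVec, dotProduct_mulVec _ (fromBlocks A B C D)ᴴ, ← star_mulVec,
    fromBlocks_mulVec A, Sum.elim_comp_inl, Sum.elim_comp_inr,
    re_star_dotProduct_fromBlocks_one_mulVec, re_star_dotProduct_fromBlocks_one_mulVec]

end KYPMatrix

section MatrixSystem

variable {n m p : Type*} [Fintype n] [DecidableEq n] [Fintype m] [DecidableEq m] [Fintype p]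
  {A : Matrix n n ℂ} {B : Matrix n m ℂ} {C : Matrix p n ℂ} {D : Matrix p m ℂ}
  {P : Matrix n n ℂ}

/-- The linear system with coefficient matrices `A`, `B`, `C`, `D`. -/
noncomputable def matrixSystem (A : Matrix n n ℂ) (B : Matrix n m ℂ) (C : Matrix p n ℂ)
    (D : Matrix p m ℂ) : LinearSystem (n → ℂ) (EuclideanSpace ℂ m) (EuclideanSpace ℂ p) where
  A := A.toLin'.toContinuousLinearMap
  B := (B.toLin' ∘ₗ (WithLp.linearEquiv 2 ℂ (m → ℂ)).toLinearMap).toContinuousLinearMap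
  C := ((WithLp.linearEquiv 2 ℂ (p → ℂ)).symm.toLinearMap ∘ₗ C.toLin').toContinuousLinearMap
  D := (toLpLin 2 2 D).toContinuousLinearMap

lemma matrixSystem_step (x : n → ℂ) (u : EuclideanSpace ℂ m) :
    (matrixSystem A B C D).A x + (matrixSystem A B C D).B u = A *ᵥ x + B *ᵥ u.ofLp := rfl

lemma matrixSystem_out (x : n → ℂ) (u : EuclideanSpace ℂ m) :
    (matrixSystem A B C D).C x + (matrixSystem A B C D).D u =
      WithLp.toLp 2 (C *ᵥ x + D *ᵥ u.ofLp) := rfl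

lemma matrixSystem_pow_A_apply (k : ℕ) (x : n → ℂ) :
    ((matrixSystem A B C D).A ^ k) x = A ^ k *ᵥ x := by
  induction k generalizing x with
  | zero => simp
  | succ k ih =>
    rw [pow_succ, pow_succ, mul_apply_eq_comp, ih, ← mulVec_mulVec]
    rfl

lemma spectralRadius_matrixSystem : spectralRadius ℂ (matrixSystem A B C D).A =
    spectralRadius ℂ A := by
  have hspec : spectrum ℂ (matrixSystem A B C D).A = spectrum ℂ A :=
    (AlgEquiv.spectrum_eq (Module.End.toContinuousLinearMap (n → ℂ)) A.toLin').trans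
      (spectrum_toLin' A)
  rw [spectralRadius, spectralRadius, hspec]

lemma posSemidef_neg_kypMatrix_iff (hP : P.IsHermitian) :
    (-kypMatrix A B C D P).PosSemidef ↔
      (matrixSystem A B C D).IsStorage 1 fun x => (star x ⬝ᵥ P *ᵥ x).re := by
  rw [posSemidef_iff_re_dotProduct_nonneg (isHermitian_neg_kypMatrix hP)]
  simp only [LinearSystem.IsStorage, matrixSystem_step, matrixSystem_out, one_mul]
  constructor
  · intro h x u
    rw [← sub_nonneg]
    exact (h (Sum.elim x u.ofLp)).trans_eq (re_star_dotProduct_neg_kypMatrix_mulVec x u.ofLp)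
  · intro h v
    rw [← Sum.elim_comp_inl_inr v, re_star_dotProduct_neg_kypMatrix_mulVec, sub_nonneg]
    exact h (v ∘ Sum.inl) (WithLp.toLp 2 (v ∘ Sum.inr))

end MatrixSystem

section Main

variable {n m p : ℕ} {A : Matrix (Fin n) (Fin n) ℂ} {B : Matrix (Fin n) (Fin m) ℂ}
  {C : Matrix (Fin p) (Fin n) ℂ} {D : Matrix (Fin p) (Fin m) ℂ}

lemma muInfty_eq_hInftySq : muInfty A B C D = (matrixSystem A B C D).hInftySq := by
  rw [muInfty, LinearSystem.hInftySq]
  congr 1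
  ext r
  constructor
  · rintro ⟨w, x, z, hw, hw1, hx0, hx, hz, rfl⟩
    let u : ℕ → EuclideanSpace ℂ (Fin m) := fun k => WithLp.toLp 2 (w k)
    have hstate : ∀ k, x k = (matrixSystem A B C D).state k (0, u) := fun k =>
      hx0 ▸ (matrixSystem A B C D).eq_state hx k
    refine ⟨u, ?_, tsum_congr fun k => ?_⟩
    · simpa only [mem_ofPred_eq, EuclideanSpace.norm_sq_eq, ← hw1] using hw.hasSum
    · rw [LinearSystem.output_apply, ← hstate, matrixSystem_out, EuclideanSpace.norm_sq_eq, hz]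
  · rintro ⟨u, hu, rfl⟩
    simp only [mem_ofPred_eq, EuclideanSpace.norm_sq_eq] at hu
    exact ⟨fun k => (u k).ofLp, fun k => (matrixSystem A B C D).state k (0, u),
      fun k => ((matrixSystem A B C D).output k (0, u)).ofLp, hu.summable, hu.tsum_eq, rfl,
      fun _ => rfl, fun _ => rfl, by simp only [EuclideanSpace.norm_sq_eq]⟩

lemma ctrbMatrix_mulVec (v : Fin n × Fin m → ℂ) :
    ctrbMatrix A B *ᵥ v = ∑ j : Fin n, A ^ (j : ℕ) *ᵥ B *ᵥ fun i => v (j, i) := by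
  ext i
  simp only [ctrbMatrix, mulVec_mulVec, Finset.sum_apply, mulVec, dotProduct, of_apply,
    Fintype.sum_prod_type]

lemma ctrbMatrix_mulVec_surjective (h : (ctrbMatrix A B).rank = n) :
    Surjective (ctrbMatrix A B).mulVec := by
  have hrange : LinearMap.range (ctrbMatrix A B).mulVecLin = ⊤ :=
    Submodule.eq_top_of_finrank_eq (h.trans (Module.finrank_fin_fun ℂ).symm)
  exact LinearMap.range_eq_top.1 hrange

lemma isControllable_matrixSystem (h : (ctrbMatrix A B).rank = n) :
    (matrixSystem A B C D).IsControllable := fun x => by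
  obtain ⟨v, rfl⟩ := ctrbMatrix_mulVec_surjective h x
  let u : ℕ → EuclideanSpace ℂ (Fin m) := fun j =>
    if hj : j < n then WithLp.toLp 2 fun i => v (⟨j, hj⟩, i) else 0
  obtain ⟨w, hw⟩ := (matrixSystem A B C D).exists_state_eq_sum u n
  refine ⟨n, w, hw.trans ?_⟩
  rw [ctrbMatrix_mulVec, Finset.sum_range]
  refine Finset.sum_congr rfl fun j _ => ?_
  simp only [matrixSystem_pow_A_apply, u, j.2, dite_true]
  rfl

end Main

/-- the non-strict discrete-time KYP lemma, under controllability of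
`(A, B)`: `μ∞ ≤ 1` iff the KYP LMI has a Hermitian solution with non-strict inequality. -/
theorem kyp_lemma_nonstrict {n m p : ℕ}
    (A : Matrix (Fin n) (Fin n) ℂ) (hA : spectralRadius ℂ A < 1)
    (B : Matrix (Fin n) (Fin m) ℂ) (C : Matrix (Fin p) (Fin n) ℂ)
    (D : Matrix (Fin p) (Fin m) ℂ)
    (hctrb : (ctrbMatrix A B).rank = n) :
    muInfty A B C D ≤ 1 ↔
      ∃ P : Matrix (Fin n) (Fin n) ℂ, P.IsHermitian ∧
        (-(fromBlocks (Aᴴ * P * A - P) (Aᴴ * P * B) (Bᴴ * P * A) (Bᴴ * P * B) +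
            fromBlocks (Cᴴ * C) (Cᴴ * D) (Dᴴ * C)
              (Dᴴ * D - (1 : Matrix (Fin m) (Fin m) ℂ)))).PosSemidef := by
  have hstable : spectralRadius ℂ (matrixSystem A B C D).A < 1 :=
    spectralRadius_matrixSystem.trans_lt hA
  rw [muInfty_eq_hInftySq, LinearSystem.hInftySq_le_one_iff hstable]
  constructor
  · intro hS
    obtain ⟨f, hf, hstorage⟩ := hS.exists_isSymm_isStorage (isControllable_matrixSystem hctrb)
    obtain ⟨P, hP, hPf⟩ := exists_isHermitian_dotProduct_mulVec_eq hf
    exact ⟨P, hP, (posSemidef_neg_kypMatrix_iff hP).2 (by simpa only [hPf] using hstorage)⟩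
  · rintro ⟨P, hP, hLMI⟩
    have hstorage := (posSemidef_neg_kypMatrix_iff hP).1 hLMI
    have hzero : (star (0 : Fin n → ℂ) ⬝ᵥ P *ᵥ 0).re = 0 := by simp
    have hcont : Continuous fun x : Fin n → ℂ => (star x ⬝ᵥ P *ᵥ x).re := by fun_prop
    exact hstorage.isNonexpansive hzero (hstorage.nonneg hstable hzero hcont.continuousAt)
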